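/- Intermediate optimality bound (Eq. 18): Suppose π* is a policy maximizing J, i.e. J(π*) ≥ J(π) for every policy π. Then for every integer m ≥ 0, J(π*) ≤ ∑_{s : p(s)>0} p(s) ∑_{a∈A} π*(a|s) ( F(s,a) − (1/β) log( πᵐ(a|s) / priorᵐ(a) ) ). -/

import Mathlib

open Finset

/-- A probability distribution on a finite type: nonnegative and sums to one. -/
def IsDist {X : Type*} [Fintype X] (d : X → ℝ) : Prop :=
  (∀ x, 0 ≤ d x) ∧ ∑ x, d x = 1

/-- Kullback–Leibler divergence: sum over points where `μ` is positive. -/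
noncomputable def KL {X : Type*} [Fintype X] (μ ν : X → ℝ) : ℝ :=
  ∑ x, if 0 < μ x then μ x * Real.log (μ x / ν x) else 0

/-- Marginal action distribution of policy `π` under state distribution `p`. -/
noncomputable def margPol {S A : Type*} [Fintype S] [Fintype A]
    (p : S → ℝ) (π : S → A → ℝ) (a : A) : ℝ :=
  ∑ s, p s * π s a

/-- Evaluation operator `B_{q,π} V (s)` (with `F s a = R s a + γ 𝔼[V]` precomputed). -/
noncomputable def Beval {S A : Type*} [Fintype S] [Fintype A]
    (F : S → A → ℝ) (β : ℝ) (q : A → ℝ) (π : S → A → ℝ) (s : S) : ℝ :=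
  ∑ a, if 0 < π s a then π s a * (F s a - (1 / β) * Real.log (π s a / q a)) else 0

/-- Mutual-information-regularized objective `J(π)`. -/
noncomputable def Jobj {S A : Type*} [Fintype S] [Fintype A]
    (p : S → ℝ) (F : S → A → ℝ) (β : ℝ) (π : S → A → ℝ) : ℝ :=
  ∑ s, if 0 < p s then
    p s * ∑ a, (if 0 < π s a then
      π s a * (F s a - (1 / β) * Real.log (π s a / margPol p π a)) else 0)
  else 0

/-- Blahut–Arimoto policy iterates. -/
noncomputable def BApol {S A : Type*} [Fintype S] [Fintype A]
    (p : S → ℝ) (F : S → A → ℝ) (β : ℝ) (π0 : S → A → ℝ) : ℕ → S → A → ℝ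
  | 0 => π0
  | m + 1 => fun s a =>
      ((∑ s', p s' * BApol p F β π0 m s' a) * Real.exp (β * F s a)) /
        ∑ a', (∑ s', p s' * BApol p F β π0 m s' a') * Real.exp (β * F s a')

/-- Blahut–Arimoto prior iterates: the marginal of the `m`-th policy under `p`. -/
noncomputable def BAprior {S A : Type*} [Fintype S] [Fintype A]
    (p : S → ℝ) (F : S → A → ℝ) (β : ℝ) (π0 : S → A → ℝ) (m : ℕ) (a : A) : ℝ :=
  ∑ s, p s * BApol p F β π0 m s a

/-!
For nonnegative `w` whose support contains that of `π` wherever `p` is positive, the surrogate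
objective, in which `w` prices the information instead of `π`, exceeds `J(π)` by exactly `1 / β`
times the divergence of the joint law `p(s) π(a|s)` from `m_π(a) · p(s) w(a|s) / m_w(a)`. The
latter draws an action from the marginal of `π` and then a state from the Bayes posterior of `w`, so
it has no more mass than the former, and Gibbs' inequality makes the divergence nonnegative. The
bound on the iterates is the case `w = πᵐ`.
-/

theorem KL_nonneg {X : Type*} [Fintype X] {μ ν : X → ℝ} (hν : ∀ x, 0 ≤ ν x)
    (hsupp : ∀ x, 0 < μ x → 0 < ν x) (hsum : ∑ x, ν x ≤ ∑ x, μ x) : 0 ≤ KL μ ν :=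
  calc
    0 ≤ ∑ x, (μ x - ν x) := by rw [sum_sub_distrib]; exact sub_nonneg.mpr hsum
    _ ≤ KL μ ν := sum_le_sum fun x _ => by
      split_ifs with hμx
      · have hνx := hsupp x hμx
        calc
          μ x - ν x = μ x * (1 - (μ x / ν x)⁻¹) := by field_simp
          _ ≤ μ x * Real.log (μ x / ν x) := by
            gcongr
            exact Real.one_sub_inv_le_log_of_pos (div_pos hμx hνx)
      · linarith [hν x]

theorem IsDist.exists_pos {X : Type*} [Fintype X] {d : X → ℝ} (hd : IsDist d) : ∃ x, 0 < d x := by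
  have hsum : ∑ _ : X, (0 : ℝ) < ∑ x, d x := by simp [hd.2]
  obtain ⟨x, -, hx⟩ := exists_lt_of_sum_lt hsum
  exact ⟨x, hx⟩

section Policies

variable {S A : Type*} {p : S → ℝ} {π w : S → A → ℝ}

/-- The joint law `p(s) π(a|s)` of state and action, compared in divergence with
`posteriorJoint`. -/
def jointPol (p : S → ℝ) (π : S → A → ℝ) (x : S × A) : ℝ :=
  p x.1 * π x.1 x.2

theorem jointPol_nonneg (hp : ∀ s, 0 ≤ p s) (hπ : ∀ s a, 0 ≤ π s a) (x : S × A) :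
    0 ≤ jointPol p π x :=
  mul_nonneg (hp x.1) (hπ x.1 x.2)

variable [Fintype S] [Fintype A]

theorem margPol_nonneg (hp : ∀ s, 0 ≤ p s) (hπ : ∀ s a, 0 ≤ π s a) (a : A) :
    0 ≤ margPol p π a :=
  sum_nonneg fun s _ => mul_nonneg (hp s) (hπ s a)

theorem margPol_pos (hp : ∀ s, 0 ≤ p s) (hπ : ∀ s a, 0 ≤ π s a) {s : S} {a : A}
    (hps : 0 < p s) (hπsa : 0 < π s a) : 0 < margPol p π a :=
  sum_pos' (fun s' _ => mul_nonneg (hp s') (hπ s' a)) ⟨s, mem_univ s, mul_pos hps hπsa⟩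

theorem BApol_pos (hp : ∀ s, 0 ≤ p s) (hp_pos : ∃ s, 0 < p s) (F : S → A → ℝ) (β : ℝ)
    (hπ : ∀ s a, 0 < π s a) (m : ℕ) (s : S) (a : A) : 0 < BApol p F β π m s a := by
  induction m generalizing s a with
  | zero => exact hπ s a
  | succ m ih =>
    obtain ⟨s₀, hs₀⟩ := hp_pos
    have hweight : ∀ a', 0 < margPol p (BApol p F β π m) a' * Real.exp (β * F s a') := fun a' =>
      mul_pos (margPol_pos hp (fun s' b => (ih s' b).le) hs₀ (ih s₀ a')) (Real.exp_pos _)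
    exact div_pos (hweight a) (sum_pos (fun a' _ => hweight a') ⟨a, mem_univ a⟩)

/-- The joint law in which the action has the marginal law of `π` and the state, given the action,
has the Bayes posterior `p(s) w(a|s) / m_w(a)` of the reference policy `w`. Actions with
`m_w(a) = 0` receive mass zero. -/
noncomputable def posteriorJoint (p : S → ℝ) (w π : S → A → ℝ) (x : S × A) : ℝ :=
  margPol p π x.2 * (jointPol p w x / margPol p w x.2)

/-- The objective of `π` with the information cost `log (π(a|s) / m_π(a))` replaced by the cost
`log (w(a|s) / m_w(a))` of a reference policy `w`; at `w = πᵐ` this is the right-hand side of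
Eq. 18. -/
noncomputable def surrogateObj (p : S → ℝ) (F : S → A → ℝ) (β : ℝ) (w π : S → A → ℝ) : ℝ :=
  ∑ s, if 0 < p s then
    p s * ∑ a, π s a * (F s a - (1 / β) * Real.log (w s a / margPol p w a)) else 0

theorem sum_jointPol (p : S → ℝ) (π : S → A → ℝ) :
    ∑ x, jointPol p π x = ∑ a, margPol p π a :=
  Fintype.sum_prod_type_right _

theorem posteriorJoint_nonneg (hp : ∀ s, 0 ≤ p s) (hw : ∀ s a, 0 ≤ w s a)
    (hπ : ∀ s a, 0 ≤ π s a) (x : S × A) : 0 ≤ posteriorJoint p w π x :=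
  mul_nonneg (margPol_nonneg hp hπ x.2)
    (div_nonneg (jointPol_nonneg hp hw x) (margPol_nonneg hp hw x.2))

theorem posteriorJoint_pos (hp : ∀ s, 0 ≤ p s) (hw : ∀ s a, 0 ≤ w s a) (hπ : ∀ s a, 0 ≤ π s a)
    {s : S} {a : A} (hps : 0 < p s) (hwsa : 0 < w s a) (hπsa : 0 < π s a) :
    0 < posteriorJoint p w π (s, a) :=
  mul_pos (margPol_pos hp hπ hps hπsa) (div_pos (mul_pos hps hwsa) (margPol_pos hp hw hps hwsa))

theorem sum_posteriorJoint_le (hp : ∀ s, 0 ≤ p s) (hπ : ∀ s a, 0 ≤ π s a) (w : S → A → ℝ) :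
    ∑ x, posteriorJoint p w π x ≤ ∑ x, jointPol p π x :=
  calc
    ∑ x, posteriorJoint p w π x
        = ∑ a, margPol p π a * (margPol p w a / margPol p w a) := by
      simp_rw [Fintype.sum_prod_type_right, posteriorJoint, ← mul_sum, ← sum_div]
      rfl
    _ ≤ ∑ a, margPol p π a :=
      sum_le_sum fun a _ => mul_le_of_le_one_right (margPol_nonneg hp hπ a) (div_self_le_one _)
    _ = ∑ x, jointPol p π x := (sum_jointPol p π).symm

theorem log_jointPol_div_posteriorJoint (hp : ∀ s, 0 ≤ p s) (hw : ∀ s a, 0 ≤ w s a)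
    (hπ : ∀ s a, 0 ≤ π s a) {s : S} {a : A} (hps : 0 < p s) (hwsa : 0 < w s a)
    (hπsa : 0 < π s a) :
    Real.log (jointPol p π (s, a) / posteriorJoint p w π (s, a)) =
      Real.log (π s a / margPol p π a) - Real.log (w s a / margPol p w a) := by
  have hmπ := margPol_pos hp hπ hps hπsa
  have hmw := margPol_pos hp hw hps hwsa
  rw [← Real.log_div (div_pos hπsa hmπ).ne' (div_pos hwsa hmw).ne']
  congr 1
  simp only [posteriorJoint, jointPol]
  field_simp

theorem Jobj_add_KL_eq_surrogateObj (hp : ∀ s, 0 ≤ p s) (hw : ∀ s a, 0 ≤ w s a)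
    (hπ : ∀ s a, 0 ≤ π s a) (hsupp : ∀ s a, 0 < p s → 0 < π s a → 0 < w s a)
    (F : S → A → ℝ) (β : ℝ) :
    Jobj p F β π + (1 / β) * KL (jointPol p π) (posteriorJoint p w π) =
      surrogateObj p F β w π := by
  rw [Jobj, KL, surrogateObj, Fintype.sum_prod_type, mul_sum, ← sum_add_distrib]
  refine sum_congr rfl fun s _ => ?_
  rcases (hp s).eq_or_lt' with hps | hps
  · simp [jointPol, hps]
  rw [if_pos hps, if_pos hps, mul_sum, mul_sum, mul_sum, ← sum_add_distrib]
  refine sum_congr rfl fun a _ => ?_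
  rcases (hπ s a).eq_or_lt' with hπsa | hπsa
  · simp [jointPol, hπsa]
  have hjoint : 0 < jointPol p π (s, a) := mul_pos hps hπsa
  rw [if_pos hπsa, if_pos hjoint,
    log_jointPol_div_posteriorJoint hp hw hπ hps (hsupp s a hps hπsa) hπsa, jointPol]
  ring

theorem intermediate_optimality_bound_general (hp : ∀ s, 0 ≤ p s) (hw : ∀ s a, 0 ≤ w s a)
    (hπ : ∀ s a, 0 ≤ π s a) (hsupp : ∀ s a, 0 < p s → 0 < π s a → 0 < w s a)
    (F : S → A → ℝ) {β : ℝ} (hβ : 0 < β) :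
    Jobj p F β π ≤ surrogateObj p F β w π := by
  have hKL : 0 ≤ KL (jointPol p π) (posteriorJoint p w π) := by
    refine KL_nonneg (posteriorJoint_nonneg hp hw hπ) ?_ (sum_posteriorJoint_le hp hπ w)
    rintro ⟨s, a⟩ hjoint
    have hps : 0 < p s := pos_of_mul_pos_left hjoint (hπ s a)
    have hπsa : 0 < π s a := pos_of_mul_pos_right hjoint (hp s)
    exact posteriorJoint_pos hp hw hπ hps (hsupp s a hps hπsa) hπsa
  rw [← Jobj_add_KL_eq_surrogateObj hp hw hπ hsupp F β]
  exact le_add_of_nonneg_right (mul_nonneg (one_div_pos.mpr hβ).le hKL)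

end Policies

/-- Intermediate optimality bound (Eq. 18). -/
theorem intermediate_optimality_bound
    {S A : Type*} [Fintype S] [Fintype A] [Nonempty S] [Nonempty A]
    (p : S → ℝ) (hp : IsDist p)
    (R : S → A → ℝ) (P : S → A → S → ℝ) (hP : ∀ s a, IsDist (P s a))
    (V : S → ℝ) (β : ℝ) (hβ : 0 < β) (γ : ℝ) (hγ : 0 < γ ∧ γ < 1)
    (F : S → A → ℝ) (hF : ∀ s a, F s a = R s a + γ * ∑ s', P s a s' * V s')
    (π0 : S → A → ℝ) (hπ0 : ∀ s, IsDist (π0 s)) (hπ0pos : ∀ s a, 0 < π0 s a)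
    (πstar : S → A → ℝ) (hπstar : ∀ s, IsDist (πstar s))
    (hopt : ∀ π : S → A → ℝ, (∀ s, IsDist (π s)) → Jobj p F β π ≤ Jobj p F β πstar)
    (m : ℕ) :
    Jobj p F β πstar
      ≤ ∑ s, if 0 < p s then
          p s * ∑ a, πstar s a *
            (F s a - (1 / β) *
              Real.log (BApol p F β π0 m s a / BAprior p F β π0 m a)) else 0 := by
  have hw := BApol_pos hp.1 hp.exists_pos F β hπ0pos m
  exact intermediate_optimality_bound_general hp.1 (fun s a => (hw s a).le)
    (fun s => (hπstar s).1) (fun s a _ _ => hw s a) F hβ
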